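/- Let f : ℝ^d → ℝ be differentiable, μ-strongly convex with μ > 0, and L-smooth with L ≥ μ, with minimizer x* and f* = f(x*). Let 0 < a < 1 and let (x^k) be a sequence satisfying x^{k+1} = x^k − η_k ∇f(x^k) for stepsizes η_k with a/L ≤ η_k and η_k‖∇f(x^k)‖² ≤ 2(f(x^k) − f*). Then for all k, ‖x^k − x*‖² ≤ (1 − aμ/L)^k ‖x^0 − x*‖². -/

import Mathlib

/-!
A step `x - η • g` changes the squared distance to `z` by `-2η⟪g, x - z⟫ + η²‖g‖²`. Strong
convexity bounds `⟪g, x - z⟫` below by `f x - f z + (μ / 2)‖x - z‖²`, and the upper bound on the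
stepsize makes `η²‖g‖²` at most `2η(f x - f z)`. The function gaps cancel, leaving the contraction
factor `1 - ημ`, which the lower bound on the stepsize makes uniform.
-/

local notation "⟪" x ", " y "⟫" => @inner ℝ _ _ x y

section

variable {E : Type*} [SeminormedAddCommGroup E] [InnerProductSpace ℝ E]

theorem norm_sub_smul_sub_sq (x z g : E) (η : ℝ) :
    ‖x - η • g - z‖ ^ 2 = ‖x - z‖ ^ 2 - 2 * η * ⟪g, x - z⟫ + η * (η * ‖g‖ ^ 2) := by
  rw [sub_right_comm, norm_sub_sq_real, inner_smul_right, real_inner_comm, norm_smul, mul_pow,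
    Real.norm_eq_abs, sq_abs]
  ring

theorem norm_sub_smul_sub_sq_le {x z g : E} {η μ δ : ℝ} (hη : 0 ≤ η)
    (hinner : δ + μ / 2 * ‖x - z‖ ^ 2 ≤ ⟪g, x - z⟫) (hstep : η * ‖g‖ ^ 2 ≤ 2 * δ) :
    ‖x - η • g - z‖ ^ 2 ≤ (1 - η * μ) * ‖x - z‖ ^ 2 :=
  calc ‖x - η • g - z‖ ^ 2
      = ‖x - z‖ ^ 2 - 2 * η * ⟪g, x - z⟫ + η * (η * ‖g‖ ^ 2) := norm_sub_smul_sub_sq x z g η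
    _ ≤ ‖x - z‖ ^ 2 - 2 * η * (δ + μ / 2 * ‖x - z‖ ^ 2) + η * (2 * δ) := by gcongr
    _ = (1 - η * μ) * ‖x - z‖ ^ 2 := by ring

theorem le_pow_mul_of_succ_le_mul {u : ℕ → ℝ} {q : ℝ} (hu : ∀ k, 0 ≤ u k)
    (hsucc : ∀ k, u (k + 1) ≤ q * u k) (k : ℕ) : u k ≤ q ^ k * u 0 := by
  obtain hq | hq := le_or_gt 0 q
  · exact le_geom hq k fun j _ => hsucc j
  · have hzero (j : ℕ) : u j = 0 :=
      le_antisymm (nonpos_of_mul_nonneg_right ((hu (j + 1)).trans (hsucc j)) hq) (hu j)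
    simp [hzero]

theorem twin_polyak_linear_convergence_general {f : E → ℝ} {x g : ℕ → E} {z : E} {η : ℕ → ℝ}
    {μ c : ℝ} (hμ : 0 ≤ μ) (hc : 0 ≤ c)
    (hsc : ∀ k, f (x k) + ⟪g k, z - x k⟫ + μ / 2 * ‖z - x k‖ ^ 2 ≤ f z)
    (hstep : ∀ k, x (k + 1) = x k - η k • g k)
    (hηlb : ∀ k, c ≤ η k)
    (hηub : ∀ k, η k * ‖g k‖ ^ 2 ≤ 2 * (f (x k) - f z)) (k : ℕ) :
    ‖x k - z‖ ^ 2 ≤ (1 - c * μ) ^ k * ‖x 0 - z‖ ^ 2 := by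
  refine le_pow_mul_of_succ_le_mul (u := fun k => ‖x k - z‖ ^ 2) (fun _ => sq_nonneg _)
    (fun k => ?_) k
  have hinner : f (x k) - f z + μ / 2 * ‖x k - z‖ ^ 2 ≤ ⟪g k, x k - z⟫ := by
    have hsc_k := hsc k
    rw [← neg_sub (x k) z, inner_neg_right, norm_neg] at hsc_k
    linarith
  calc ‖x (k + 1) - z‖ ^ 2
      = ‖x k - η k • g k - z‖ ^ 2 := by rw [hstep]
    _ ≤ (1 - η k * μ) * ‖x k - z‖ ^ 2 :=
        norm_sub_smul_sub_sq_le (hc.trans (hηlb k)) hinner (hηub k)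
    _ ≤ (1 - c * μ) * ‖x k - z‖ ^ 2 := by gcongr; exact hηlb k

end

/-- Gradient descent on a μ-strongly convex, L-smooth function with stepsizes
satisfying a/L ≤ η_k and η_k‖∇f(xᵏ)‖² ≤ 2(f(xᵏ) - f*) converges linearly with
factor (1 - aμ/L). -/
theorem twin_polyak_linear_convergence
    (d : ℕ) (f : EuclideanSpace ℝ (Fin d) → ℝ) (μ L : ℝ)
    (hμ : 0 < μ) (hμL : μ ≤ L)
    (hf : Differentiable ℝ f)
    (hsc : ∀ x y : EuclideanSpace ℝ (Fin d),
      f y ≥ f x + ⟪gradient f x, y - x⟫ + μ / 2 * ‖y - x‖ ^ 2)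
    (hsmooth : ∀ x y : EuclideanSpace ℝ (Fin d),
      f y ≤ f x + ⟪gradient f x, y - x⟫ + L / 2 * ‖y - x‖ ^ 2)
    (xstar : EuclideanSpace ℝ (Fin d)) (hmin : ∀ z, f xstar ≤ f z)
    (a : ℝ) (ha0 : 0 < a) (ha1 : a < 1)
    (x : ℕ → EuclideanSpace ℝ (Fin d)) (η : ℕ → ℝ)
    (hstep : ∀ k, x (k + 1) = x k - η k • gradient f (x k))
    (hηlb : ∀ k, a / L ≤ η k)
    (hηub : ∀ k, η k * ‖gradient f (x k)‖ ^ 2 ≤ 2 * (f (x k) - f xstar)) :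
    ∀ k, ‖x k - xstar‖ ^ 2 ≤ (1 - a * μ / L) ^ k * ‖x 0 - xstar‖ ^ 2 := by
  have hL : 0 < L := hμ.trans_le hμL
  rw [← div_mul_eq_mul_div]
  exact twin_polyak_linear_convergence_general hμ.le (div_pos ha0 hL).le
    (fun k => hsc (x k) xstar) hstep hηlb hηub
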